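/- For distinct odd primes p and q, there is no finite graph Γ with Aut(Γ) isomorphic to the dihedral group D_{pq} of order 2pq whose minimal base size (determining number) equals 3; hence the determining set of D_{pq} is {1, 2} while the base size set of D_{pq} contains 3. -/

import Mathlib

/-- The automorphism group of a simple graph, as a subgroup of the permutation group of
its vertices. -/
def graphAut {V : Type*} (Γ : SimpleGraph V) : Subgroup (Equiv.Perm V) where
  carrier := {φ | ∀ u v, Γ.Adj (φ u) (φ v) ↔ Γ.Adj u v}
  one_mem' := by intro u v; rfl
  mul_mem' := by
    intro a b ha hb u v
    simpa [Equiv.Perm.mul_apply] using (ha (b u) (b v)).trans (hb u v)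
  inv_mem' := by
    intro a ha u v
    simpa using (ha (a⁻¹ u) (a⁻¹ v)).symm

/-- The base size of the natural action of a subgroup of `Equiv.Perm S` on `S`. -/
noncomputable def permBaseSize {S : Type*} (G : Subgroup (Equiv.Perm S)) : ℕ :=
  sInf {n | ∃ B : Finset S,
    (∀ g ∈ G, (∀ x ∈ B, g x = x) → g = 1) ∧ B.card = n}

/-- The base size (determining number) of a graph: the minimal cardinality of a set of
vertices whose pointwise stabilizer in the automorphism group is trivial. -/
noncomputable def graphBaseSize {V : Type*} (Γ : SimpleGraph V) : ℕ :=
  permBaseSize (graphAut Γ)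

/-!
Suppose `Aut Γ` is the dihedral group of order `2pq` and no two vertices form a base. A vertex with
trivial rotation stabilizer would form a base with its image under `r 1`, so every vertex is fixed
by the rotations of order `p` or by those of order `q`. Split the vertices into those moved by `r q`
and those fixed by it. For `v` and `w` on different sides, the rotations fixing `v` and those fixing
`w` generate all rotations, and a reflection fixes `v`; hence every reflection of `v` can be
realised by a rotation fixing `w`. So applying a reflection on one side and the identity on the
other preserves adjacency, and this automorphism is not in the dihedral group.

Base size 2 is attained by the cycle. Base size 1 is attained by two linked Cayley graphs on the
generating reflections `sr 0`, `sr 1`, on which only left multiplications act. For base size 3, let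
the group act on the disjoint union of `ZMod p` and `ZMod q`: a base has to meet both orbits, and
some reflection fixes any two points in different orbits.
-/

section BaseSize

open MulAction

/-- A base of a group action: a set whose pointwise stabilizer is trivial. -/
def IsBase (G : Type*) {α : Type*} [Group G] [MulAction G α] (B : Set α) : Prop :=
  ∀ g : G, (∀ x ∈ B, g • x = x) → g = 1

variable {G α β : Type*} [Group G] [MulAction G α]

theorem IsBase.faithfulSMul {B : Set α} (hB : IsBase G B) : FaithfulSMul G α := by
  refine (faithfulSMul_iff).2 fun g hg => hB g fun x _ => ?_
  exact hg x

theorem IsBase.nonempty [Nontrivial G] {B : Set α} (hB : IsBase G B) : B.Nonempty := by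
  obtain ⟨g, hg⟩ := exists_ne (1 : G)
  by_contra hempty
  rw [Set.not_nonempty_iff_eq_empty] at hempty
  exact hg (hB g fun x hx => by simp [hempty] at hx)

theorem permBaseSize_range_toPermHom [FaithfulSMul G α] :
    permBaseSize (toPermHom G α).range =
      sInf {k | ∃ B : Finset α, IsBase G (B : Set α) ∧ B.card = k} := by
  simp only [permBaseSize, IsBase, MonoidHom.mem_range, forall_exists_index,
    forall_apply_eq_imp_iff, toPermHom_apply, toPerm_apply, Finset.mem_coe,
    ← (toPermHom G α).map_one, toPerm_injective.eq_iff]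

theorem permBaseSize_range_toPermHom_eq_card {B : Finset α} (hB : IsBase G (B : Set α))
    (hmin : ∀ C : Finset α, IsBase G (C : Set α) → B.card ≤ C.card) :
    permBaseSize (toPermHom G α).range = B.card := by
  have := hB.faithfulSMul
  rw [permBaseSize_range_toPermHom]
  refine le_antisymm (Nat.sInf_le ⟨B, hB, rfl⟩) (le_csInf ⟨B.card, B, hB, rfl⟩ ?_)
  rintro _ ⟨C, hC, rfl⟩
  exact hmin C hC

theorem permBaseSize_range_toPermHom_of_isBase_pair [Nontrivial G] {x y : α}
    (hxy : IsBase G {x, y}) :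
    permBaseSize (toPermHom G α).range = 1 ∨ permBaseSize (toPermHom G α).range = 2 := by
  classical
  have := hxy.faithfulSMul
  have hbase : IsBase G (({x, y} : Finset α) : Set α) := by rwa [Finset.coe_pair]
  have hle : permBaseSize (toPermHom G α).range ≤ 2 := by
    rw [permBaseSize_range_toPermHom]
    exact le_trans (Nat.sInf_le ⟨_, hbase, rfl⟩) Finset.card_le_two
  have hpos : 1 ≤ permBaseSize (toPermHom G α).range := by
    rw [permBaseSize_range_toPermHom]
    refine le_csInf ⟨_, _, hbase, rfl⟩ ?_
    rintro _ ⟨B, hB, rfl⟩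
    exact Finset.card_pos.2 (Finset.coe_nonempty.1 hB.nonempty)
  omega

theorem permBaseSize_map_permCongrHom (e : α ≃ β) (H : Subgroup (Equiv.Perm α)) :
    permBaseSize (H.map e.permCongrHom.toMonoidHom) = permBaseSize H := by
  have hmap (B : Finset α) :
      (∀ g ∈ H.map e.permCongrHom.toMonoidHom, (∀ x ∈ B.map e.toEmbedding, g x = x) → g = 1) ↔
        ∀ g ∈ H, (∀ x ∈ B, g x = x) → g = 1 := by
    have hfix (g : Equiv.Perm α) :
        (∀ x ∈ B.map e.toEmbedding, e.permCongrHom g x = x) ↔ ∀ x ∈ B, g x = x := by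
      simp only [Finset.forall_mem_map, Equiv.coe_toEmbedding, Equiv.permCongrHom_coe,
        Equiv.permCongr_apply, Equiv.symm_apply_apply, e.apply_eq_iff_eq]
    simp only [Subgroup.mem_map, MulEquiv.coe_toMonoidHom, forall_exists_index, and_imp,
      forall_apply_eq_imp_iff₂, hfix, map_eq_one_iff _ e.permCongrHom.injective]
  simp only [permBaseSize, e.finsetCongr.symm.exists_congr_left, Equiv.symm_symm,
    Equiv.finsetCongr_apply, Finset.card_map, hmap]

end BaseSize

section GraphAut

open MulAction

variable {V : Type*} {Γ : SimpleGraph V}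

theorem exists_mulAction_of_mulEquiv {G : Type*} [Group G] {H : Subgroup (Equiv.Perm V)}
    (e : H ≃* G) :
    ∃ _ : MulAction G V, FaithfulSMul G V ∧ (toPermHom G V).range = H := by
  let ψ : G →* Equiv.Perm V := H.subtype.comp e.symm.toMonoidHom
  let _ : MulAction G V := compHom V ψ
  have hψ : toPermHom G V = ψ := MonoidHom.ext fun g => Equiv.ext fun v => rfl
  refine ⟨compHom V ψ, ⟨fun h => e.symm.injective (Subtype.ext (Equiv.ext h))⟩, ?_⟩
  rw [hψ, MonoidHom.range_comp, MonoidHom.range_eq_top.2 e.symm.surjective,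
    ← MonoidHom.range_eq_map, Subgroup.range_subtype]

theorem graphAut_mulEquiv_and_graphBaseSize_eq_card {G : Type*} [Group G] [MulAction G V]
    (hrange : (toPermHom G V).range = graphAut Γ) {B : Finset V} (hB : IsBase G (B : Set V))
    (hmin : ∀ C : Finset V, IsBase G (C : Set V) → B.card ≤ C.card) :
    Nonempty (graphAut Γ ≃* G) ∧ graphBaseSize Γ = B.card := by
  have := hB.faithfulSMul
  rw [graphBaseSize, ← hrange]
  exact ⟨⟨(MonoidHom.ofInjective toPerm_injective).symm⟩,
    permBaseSize_range_toPermHom_eq_card hB hmin⟩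

theorem ncard_neighborSet_of_mem_graphAut {φ : Equiv.Perm V} (hφ : φ ∈ graphAut Γ) (v : V) :
    (Γ.neighborSet (φ v)).ncard = (Γ.neighborSet v).ncard := by
  have himage : Γ.neighborSet (φ v) = φ '' Γ.neighborSet v := by
    ext w
    obtain ⟨u, rfl⟩ := φ.surjective w
    simpa using hφ v u
  rw [himage, Set.ncard_image_of_injective _ φ.injective]

theorem ofSubtype_subtypePerm_mem_graphAut {σ : Equiv.Perm V} (hσ : σ ∈ graphAut Γ)
    {P : V → Prop} [DecidablePred P] (hP : ∀ v, P (σ v) ↔ P v)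
    (hmixed : ∀ v w, P v → ¬P w → (Γ.Adj (σ v) w ↔ Γ.Adj v w)) :
    Equiv.Perm.ofSubtype (σ.subtypePerm hP) ∈ graphAut Γ := by
  intro u v
  by_cases hu : P u <;> by_cases hv : P v
  · rw [Equiv.Perm.ofSubtype_apply_of_mem _ hu, Equiv.Perm.ofSubtype_apply_of_mem _ hv]
    exact hσ u v
  · rw [Equiv.Perm.ofSubtype_apply_of_mem _ hu, Equiv.Perm.ofSubtype_apply_of_not_mem _ hv]
    exact hmixed u v hu hv
  · rw [Equiv.Perm.ofSubtype_apply_of_not_mem _ hu, Equiv.Perm.ofSubtype_apply_of_mem _ hv,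
      Γ.adj_comm, Γ.adj_comm u]
    exact hmixed v u hv hu
  · rw [Equiv.Perm.ofSubtype_apply_of_not_mem _ hu, Equiv.Perm.ofSubtype_apply_of_not_mem _ hv]

end GraphAut

section ZModSubgroup

theorem mem_of_add_self_mem {n : ℕ} (hn : Odd n) (S : AddSubgroup (ZMod n)) {i : ZMod n}
    (hi : i + i ∈ S) : i ∈ S := by
  obtain ⟨m, rfl⟩ := hn
  have hzero : ((2 * m + 1 : ℕ) : ZMod (2 * m + 1)) = 0 := ZMod.natCast_self _
  have hhalf : ((m + 1 : ℕ) : ZMod (2 * m + 1)) • (i + i) = i := by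
    push_cast [smul_eq_mul] at hzero ⊢
    linear_combination i * hzero
  rw [← hhalf]
  exact ZMod.smul_mem hi _

theorem sup_eq_top_of_isCoprime {n : ℕ} {S T : AddSubgroup (ZMod n)} {a b : ZMod n}
    (hab : IsCoprime a b) (ha : a ∈ S) (hb : b ∈ T) : S ⊔ T = ⊤ := by
  obtain ⟨c, d, hcd⟩ := hab
  refine eq_top_iff.2 fun i _ => AddSubgroup.mem_sup.2
    ⟨(i * c) • a, ZMod.smul_mem ha _, (i * d) • b, ZMod.smul_mem hb _, ?_⟩
  simp only [smul_eq_mul]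
  linear_combination i * hcd

theorem natCast_mem_or_natCast_mem_of_ne_bot {p q : ℕ} (hp : p.Prime) (hq : q.Prime)
    {S : AddSubgroup (ZMod (p * q))} (hS : S ≠ ⊥) :
    (p : ZMod (p * q)) ∈ S ∨ (q : ZMod (p * q)) ∈ S := by
  have : NeZero (p * q) := ⟨Nat.mul_ne_zero hp.ne_zero hq.ne_zero⟩
  have hmem {k : ℕ} (hk : S.index ∣ k) : (k : ZMod (p * q)) ∈ S := by
    obtain ⟨c, rfl⟩ := hk
    simpa using S.nsmul_index_mem (c : ZMod (p * q))
  have hcard : Nat.card S * S.index = p * q := by simp [S.card_mul_index]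
  obtain ⟨d, e, hd, he, hde⟩ := Nat.dvd_mul.1 (Dvd.intro_left _ hcard)
  rcases (Nat.dvd_prime hp).1 hd with rfl | rfl
  · exact .inr (hmem (by rwa [← hde, one_mul]))
  rcases (Nat.dvd_prime hq).1 he with rfl | rfl
  · exact .inl (hmem (by rw [← hde, mul_one]))
  · rw [← hde] at hcard
    have hone : Nat.card S = 1 := (Nat.mul_eq_right (NeZero.ne _)).1 hcard
    exact absurd (AddSubgroup.eq_bot_of_card_eq _ hone) hS

end ZModSubgroup

section DihedralAction

open DihedralGroup MulAction

/-- The stabilizer of a point in the rotation subgroup of a dihedral group, regarded as an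
additive subgroup of `ZMod n` through `i ↦ r i`. -/
def rotationStabilizer (n : ℕ) {V : Type*} [MulAction (DihedralGroup n) V] (v : V) :
    AddSubgroup (ZMod n) where
  carrier := {i | (r i : DihedralGroup n) • v = v}
  zero_mem' := one_smul _ v
  add_mem' {i j} hi hj := by
    rw [Set.mem_ofPred_eq] at hi hj ⊢
    rw [← r_mul_r, mul_smul, hj, hi]
  neg_mem' {i} hi := by
    rw [Set.mem_ofPred_eq] at hi ⊢
    rw [← inv_r, inv_smul_eq_iff, hi]

variable {n : ℕ} {V : Type*} [MulAction (DihedralGroup n) V]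

theorem mem_rotationStabilizer {v : V} {i : ZMod n} :
    i ∈ rotationStabilizer n v ↔ (r i : DihedralGroup n) • v = v :=
  Iff.rfl

theorem rotationStabilizer_smul (g : DihedralGroup n) (v : V) :
    rotationStabilizer n (g • v) = rotationStabilizer n v := by
  ext i
  rcases g with j | j
  · rw [mem_rotationStabilizer, smul_smul, r_mul_r, add_comm, ← r_mul_r, mul_smul,
      smul_left_cancel_iff, mem_rotationStabilizer]
  · rw [mem_rotationStabilizer, smul_smul, r_mul_sr, sub_eq_add_neg, ← sr_mul_r, mul_smul,
      smul_left_cancel_iff, ← mem_rotationStabilizer, neg_mem_iff]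

theorem exists_notMem_rotationStabilizer [FaithfulSMul (DihedralGroup n) V] {i : ZMod n}
    (hi : i ≠ 0) : ∃ v : V, i ∉ rotationStabilizer n v := by
  by_contra! hfix
  have hone : r i = 1 := FaithfulSMul.eq_of_smul_eq_smul fun v : V => by
    rw [one_smul, ← mem_rotationStabilizer]
    exact hfix v
  exact hi (r.inj hone)

theorem exists_sr_smul_ne {v : V} (hv : rotationStabilizer n v ≠ ⊤) :
    ∃ j : ZMod n, sr j • v ≠ v := by
  by_contra! hfix
  refine hv (eq_top_iff.2 fun i _ => ?_)
  rw [mem_rotationStabilizer, ← sub_zero i, ← sr_mul_sr, mul_smul, hfix, hfix]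

theorem mem_rotationStabilizer_of_sr_smul_eq (hn : Odd n) {v : V} {i j : ZMod n}
    (hv : sr j • v = v) (hiv : sr j • (r i : DihedralGroup n) • v = (r i : DihedralGroup n) • v) :
    i ∈ rotationStabilizer n v := by
  apply mem_of_add_self_mem hn
  rw [mem_rotationStabilizer, ← r_mul_r, mul_smul, ← hiv, smul_smul, smul_smul, r_mul_sr, sr_mul_r,
    sub_add_cancel, hv]

theorem isBase_pair_of_rotationStabilizer_eq_bot [Nontrivial (ZMod n)] (hn : Odd n) {v : V}
    (hv : rotationStabilizer n v = ⊥) :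
    IsBase (DihedralGroup n) {v, (r 1 : DihedralGroup n) • v} := by
  intro g hg
  have hgv : g • v = v := hg v (by simp)
  have hgrv : g • (r 1 : DihedralGroup n) • v = (r 1 : DihedralGroup n) • v := hg _ (by simp)
  rcases g with i | i
  · rw [← mem_rotationStabilizer, hv, AddSubgroup.mem_bot] at hgv
    rw [hgv, r_zero]
  · have hmem := mem_rotationStabilizer_of_sr_smul_eq hn hgv hgrv
    rw [hv, AddSubgroup.mem_bot] at hmem
    exact absurd hmem one_ne_zero

theorem exists_sr_smul_eq_of_not_isBase_pair {v w : V}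
    (hdisj : Disjoint (rotationStabilizer n v) (rotationStabilizer n w))
    (hbase : ¬IsBase (DihedralGroup n) {v, w}) :
    ∃ j : ZMod n, sr j • v = v ∧ sr j • w = w := by
  simp only [IsBase, Set.forall_mem_insert, Set.mem_singleton_iff, forall_eq, not_forall] at hbase
  obtain ⟨i | i, ⟨hv, hw⟩, hne⟩ := hbase
  · have hi : i ∈ (⊥ : AddSubgroup (ZMod n)) := hdisj.le_bot ⟨hv, hw⟩
    rw [AddSubgroup.mem_bot] at hi
    exact absurd (by rw [hi, r_zero]) hne
  · exact ⟨i, hv, hw⟩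

theorem exists_smul_eq_of_rotationStabilizer_sup_eq_top {v w : V} {j : ZMod n}
    (hv : sr j • v = v) (hsup : rotationStabilizer n v ⊔ rotationStabilizer n w = ⊤)
    (k : ZMod n) : ∃ g : DihedralGroup n, g • v = sr k • v ∧ g • w = w := by
  obtain ⟨a, ha, b, hb, hab⟩ := AddSubgroup.mem_sup.1 (hsup ▸ AddSubgroup.mem_top (j - k))
  refine ⟨r b, ?_, hb⟩
  conv_rhs => rw [← hv, smul_smul, sr_mul_sr, ← hab, add_comm, ← r_mul_r, mul_smul,
    mem_rotationStabilizer.1 ha]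

theorem not_exists_smul_eq_sr_smul_and_fixes (hn : Odd n) {v w : V} {j : ZMod n}
    (hv : sr j • v ≠ v) (hw : rotationStabilizer n w ≠ ⊤) :
    ¬∃ g : DihedralGroup n, g • v = sr j • v ∧ g • sr j • v = v ∧
      g • w = w ∧ g • (r 1 : DihedralGroup n) • w = (r 1 : DihedralGroup n) • w := by
  rintro ⟨i | i, hgv, hgsv, hgw, hgrw⟩
  · have hi : i ∈ rotationStabilizer n v := by
      apply mem_of_add_self_mem hn
      rw [mem_rotationStabilizer, ← r_mul_r, mul_smul, hgv, hgsv]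
    exact hv (hgv.symm.trans hi)
  · have hone : 1 ∈ rotationStabilizer n w := mem_rotationStabilizer_of_sr_smul_eq hn hgw hgrw
    refine hw (eq_top_iff.2 fun i _ => ?_)
    simpa using ZMod.smul_mem hone i

theorem exists_forall_smul_eq_sr_smul_imp_smul_ne (hn : Odd n) {Γ : SimpleGraph V}
    (hrange : (toPermHom (DihedralGroup n) V).range = graphAut Γ) {P : V → Prop}
    (hP : ∀ (g : DihedralGroup n) v, P (g • v) ↔ P v) {v₀ w₀ : V} (hv₀ : P v₀) (hw₀ : ¬P w₀)
    (hv₀_top : rotationStabilizer n v₀ ≠ ⊤) (hw₀_top : rotationStabilizer n w₀ ≠ ⊤) :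
    ∃ v w, P v ∧ ¬P w ∧ ∃ k : ZMod n, ∀ g : DihedralGroup n, g • v = sr k • v → g • w ≠ w := by
  classical
  by_contra! hindep
  obtain ⟨j, hj⟩ := exists_sr_smul_ne hv₀_top
  have haut (g : DihedralGroup n) : toPerm g ∈ graphAut Γ := hrange ▸ ⟨g, rfl⟩
  have hmixed (v w : V) (hv : P v) (hw : ¬P w) : Γ.Adj (toPerm (sr j) v) w ↔ Γ.Adj v w := by
    obtain ⟨g, hgv, hgw⟩ := hindep v w hv hw j
    rw [toPerm_apply, ← hgv]
    conv_lhs => rw [← hgw]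
    exact haut g v w
  obtain ⟨g, hg⟩ := hrange ▸ ofSubtype_subtypePerm_mem_graphAut (haut (sr j)) (hP (sr j)) hmixed
  have hmoved (v : V) (hv : P v) : g • v = sr j • v :=
    (DFunLike.congr_fun hg v).trans (Equiv.Perm.ofSubtype_apply_of_mem _ hv)
  have hfixed (w : V) (hw : ¬P w) : g • w = w :=
    (DFunLike.congr_fun hg w).trans (Equiv.Perm.ofSubtype_apply_of_not_mem _ hw)
  have hgsv₀ : g • sr j • v₀ = v₀ := by
    rw [hmoved _ ((hP _ _).2 hv₀), smul_smul, sr_mul_self, one_smul]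
  exact not_exists_smul_eq_sr_smul_and_fixes hn hj hw₀_top
    ⟨g, hmoved v₀ hv₀, hgsv₀, hfixed w₀ hw₀, hfixed _ ((hP _ _).not.2 hw₀)⟩

end DihedralAction

section TwoPrimes

open DihedralGroup MulAction

theorem exists_isBase_pair_of_range_eq_graphAut {p q : ℕ} (hp : p.Prime) (hq : q.Prime)
    (hop : Odd p) (hoq : Odd q) (hpq : p ≠ q) {V : Type*} {Γ : SimpleGraph V}
    [MulAction (DihedralGroup (p * q)) V] [FaithfulSMul (DihedralGroup (p * q)) V]
    (hrange : (toPermHom (DihedralGroup (p * q)) V).range = graphAut Γ) :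
    ∃ v w : V, IsBase (DihedralGroup (p * q)) {v, w} := by
  by_contra! hbase
  have hcop : p.Coprime q := (Nat.coprime_primes hp hq).2 hpq
  have : Fact (1 < p * q) := ⟨Nat.one_lt_mul_iff.2 ⟨hp.pos, hq.pos, .inl hp.one_lt⟩⟩
  have hpne : (p : ZMod (p * q)) ≠ 0 := by
    rw [Ne, ZMod.natCast_eq_zero_iff]
    exact Nat.not_dvd_of_pos_of_lt hp.pos (lt_mul_of_one_lt_right hp.pos hq.one_lt)
  have hqne : (q : ZMod (p * q)) ≠ 0 := by
    rw [Ne, ZMod.natCast_eq_zero_iff]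
    exact Nat.not_dvd_of_pos_of_lt hq.pos (lt_mul_of_one_lt_left hq.pos hp.one_lt)
  have hcase (v : V) : (p : ZMod (p * q)) ∈ rotationStabilizer (p * q) v ∨
      (q : ZMod (p * q)) ∈ rotationStabilizer (p * q) v :=
    natCast_mem_or_natCast_mem_of_ne_bot hp hq fun hbot =>
      hbase v _ (isBase_pair_of_rotationStabilizer_eq_bot (hop.mul hoq) hbot)
  obtain ⟨v₀, hv₀⟩ := exists_notMem_rotationStabilizer (V := V) hqne
  obtain ⟨w₀, hw₀⟩ := exists_notMem_rotationStabilizer (V := V) hpne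
  have hrefl (v : V) (hv : (q : ZMod (p * q)) ∉ rotationStabilizer (p * q) v) :
      ∃ t : ZMod (p * q), sr t • v = v := by
    have hdisj : Disjoint (rotationStabilizer (p * q) v) (rotationStabilizer (p * q) w₀) :=
      disjoint_iff.2 <| by_contra fun h =>
        (natCast_mem_or_natCast_mem_of_ne_bot hp hq h).elim (hw₀ ·.2) (hv ·.1)
    exact (exists_sr_smul_eq_of_not_isBase_pair hdisj (hbase v w₀)).imp fun _ ht => ht.1
  obtain ⟨v, w, hv, hw, k, hk⟩ := exists_forall_smul_eq_sr_smul_imp_smul_ne (hop.mul hoq) hrange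
    (P := fun v => (q : ZMod (p * q)) ∉ rotationStabilizer (p * q) v)
    (fun g v => by rw [rotationStabilizer_smul]) hv₀ (not_not.2 ((hcase w₀).resolve_left hw₀))
    (fun htop => hv₀ (htop ▸ AddSubgroup.mem_top _))
    (fun htop => hw₀ (htop ▸ AddSubgroup.mem_top _))
  obtain ⟨t, ht⟩ := hrefl v hv
  obtain ⟨g, hgv, hgw⟩ := exists_smul_eq_of_rotationStabilizer_sup_eq_top ht
    (sup_eq_top_of_isCoprime hcop.cast ((hcase v).resolve_right hv) (not_not.1 hw)) k
  exact hk g hgv hgw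

theorem graphBaseSize_eq_one_or_eq_two {p q : ℕ} (hp : p.Prime) (hq : q.Prime) (hop : Odd p)
    (hoq : Odd q) (hpq : p ≠ q) {V : Type*} {Γ : SimpleGraph V}
    (e : graphAut Γ ≃* DihedralGroup (p * q)) : graphBaseSize Γ = 1 ∨ graphBaseSize Γ = 2 := by
  obtain ⟨_, _, hrange⟩ := exists_mulAction_of_mulEquiv e
  obtain ⟨v, w, hvw⟩ := exists_isBase_pair_of_range_eq_graphAut hp hq hop hoq hpq hrange
  rw [graphBaseSize, ← hrange]
  exact permBaseSize_range_toPermHom_of_isBase_pair hvw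

end TwoPrimes

section AffineAction

open DihedralGroup MulAction

/-- The affine action of `DihedralGroup n` on a commutative ring containing an image of `ZMod n`:
`r i` is the translation `x ↦ x + i` and `sr i` is the reflection `x ↦ -x - i`. -/
instance affineAction {n : ℕ} {R : Type*} [CommRing R] [Algebra (ZMod n) R] :
    MulAction (DihedralGroup n) R where
  smul
    | r i, x => x + algebraMap (ZMod n) R i
    | sr i, x => -x - algebraMap (ZMod n) R i
  one_smul x := by
    change x + algebraMap (ZMod n) R 0 = x
    rw [map_zero, add_zero]
  mul_smul g h x := by
    rcases g with i | i <;> rcases h with j | j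
    · change x + algebraMap (ZMod n) R (i + j) =
        x + algebraMap (ZMod n) R j + algebraMap (ZMod n) R i
      rw [map_add]
      ring
    · change -x - algebraMap (ZMod n) R (j - i) =
        -x - algebraMap (ZMod n) R j + algebraMap (ZMod n) R i
      rw [map_sub]
      ring
    · change -x - algebraMap (ZMod n) R (i + j) =
        -(x + algebraMap (ZMod n) R j) - algebraMap (ZMod n) R i
      rw [map_add]
      ring
    · change x + algebraMap (ZMod n) R (j - i) =
        -(-x - algebraMap (ZMod n) R j) - algebraMap (ZMod n) R i
      rw [map_sub]
      ring

variable {n : ℕ} {R : Type*} [CommRing R] [Algebra (ZMod n) R]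

theorem r_smul (i : ZMod n) (x : R) :
    (r i : DihedralGroup n) • x = x + algebraMap (ZMod n) R i :=
  rfl

theorem sr_smul (i : ZMod n) (x : R) : sr i • x = -x - algebraMap (ZMod n) R i :=
  rfl

theorem not_isBase_of_forall_sr_smul_eq {V : Type*} [MulAction (DihedralGroup n) V] {B : Set V}
    {i : ZMod n} (hB : ∀ x ∈ B, sr i • x = x) : ¬IsBase (DihedralGroup n) B := fun hbase =>
  nomatch (hbase _ hB).trans one_def

theorem exists_eq_r_of_affine_fixes_zero_one (hR : (-1 : R) ≠ 1) {g : DihedralGroup n}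
    (h0 : g • (0 : R) = 0) (h1 : g • (1 : R) = 1) :
    ∃ i : ZMod n, g = r i ∧ algebraMap (ZMod n) R i = 0 := by
  rcases g with i | i
  · exact ⟨i, rfl, by rwa [r_smul, zero_add] at h0⟩
  · rw [sr_smul] at h0 h1
    exact absurd (by linear_combination h1 - h0) hR

theorem isBase_zero_one_of_injective (hR : (-1 : R) ≠ 1)
    (hinj : Function.Injective (algebraMap (ZMod n) R)) :
    IsBase (DihedralGroup n) ({0, 1} : Set R) := by
  intro g hg
  obtain ⟨i, rfl, hi⟩ :=
    exists_eq_r_of_affine_fixes_zero_one hR (hg 0 (by simp)) (hg 1 (by simp))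
  rw [(map_eq_zero_iff _ hinj).1 hi, r_zero]

end AffineAction

section Cycle

open DihedralGroup MulAction SimpleGraph

variable {n : ℕ}

theorem circulantGraph_one_adj [Nontrivial (ZMod n)] {u v : ZMod n} :
    (circulantGraph {1}).Adj u v ↔ u = v + 1 ∨ v = u + 1 := by
  have hne (x : ZMod n) : x ≠ x + 1 := by simp
  rw [circulantGraph_adj, Set.mem_singleton_iff, Set.mem_singleton_iff, sub_eq_iff_eq_add',
    sub_eq_iff_eq_add', and_iff_right_iff_imp]
  rintro (rfl | rfl)
  · exact (hne v).symm
  · exact hne u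

theorem toPerm_mem_graphAut_circulantGraph_one [Nontrivial (ZMod n)] (g : DihedralGroup n) :
    (toPerm g : Equiv.Perm (ZMod n)) ∈ graphAut (circulantGraph {1}) := by
  intro u v
  rw [circulantGraph_one_adj, circulantGraph_one_adj, toPerm_apply, toPerm_apply]
  rcases g with i | i
  · rw [r_smul, r_smul]
    grind
  · rw [sr_smul, sr_smul]
    grind

theorem eq_one_of_mem_graphAut_circulantGraph_one [NeZero n] [Nontrivial (ZMod n)]
    {φ : Equiv.Perm (ZMod n)} (hφ : φ ∈ graphAut (circulantGraph {1}))
    (h0 : φ 0 = 0) (h1 : φ 1 = 1) : φ = 1 := by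
  have hstep (x : ZMod n) (hx : φ x = x) (hx1 : φ (x + 1) = x + 1) :
      φ (x + 1 + 1) = x + 1 + 1 := by
    have hadj := (hφ (x + 1 + 1) (x + 1)).2 (circulantGraph_one_adj.2 (.inl rfl))
    rw [hx1, circulantGraph_one_adj, add_left_inj] at hadj
    rcases hadj with hadj | hadj
    · exact hadj
    · have hback : x = x + 1 + 1 := φ.injective (hx.trans hadj)
      rw [← hback, hx]
  have hnat (k : ℕ) : φ (k : ZMod n) = k ∧ φ ((k : ZMod n) + 1) = (k : ZMod n) + 1 := by
    induction k with
    | zero => simpa using ⟨h0, h1⟩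
    | succ k ih =>
      rw [Nat.cast_succ]
      exact ⟨ih.2, hstep _ ih.1 ih.2⟩
  ext x
  obtain ⟨k, rfl⟩ := ZMod.natCast_zmod_surjective x
  rw [(hnat k).1, Equiv.Perm.one_apply]

theorem range_toPermHom_eq_graphAut_circulantGraph_one [NeZero n] [Nontrivial (ZMod n)] :
    (toPermHom (DihedralGroup n) (ZMod n)).range = graphAut (circulantGraph {1}) := by
  refine le_antisymm ?_ fun φ hφ => ?_
  · rintro _ ⟨g, rfl⟩
    exact toPerm_mem_graphAut_circulantGraph_one g
  · suffices h : ∃ g : DihedralGroup n, g • (0 : ZMod n) = φ 0 ∧ g • (1 : ZMod n) = φ 1 by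
      obtain ⟨g, hg0, hg1⟩ := h
      refine ⟨g, inv_mul_eq_one.1 ?_⟩
      have hmem := mul_mem (inv_mem (toPerm_mem_graphAut_circulantGraph_one g)) hφ
      refine eq_one_of_mem_graphAut_circulantGraph_one hmem ?_ ?_
      · exact inv_smul_eq_iff.2 hg0.symm
      · exact inv_smul_eq_iff.2 hg1.symm
    have hadj := (hφ 1 0).2 (circulantGraph_one_adj.2 (.inl (zero_add 1).symm))
    rcases circulantGraph_one_adj.1 hadj with h | h
    · exact ⟨r (φ 0), zero_add _, by rw [h, add_comm]; rfl⟩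
    · exact ⟨sr (-φ 0), by simp [sr_smul], by rw [sr_smul, h]; simp⟩

theorem exists_graph_graphBaseSize_eq_two (hn : 2 < n) :
    ∃ (V : Type) (_ : Fintype V) (Γ : SimpleGraph V),
      Nonempty (graphAut Γ ≃* DihedralGroup n) ∧ graphBaseSize Γ = 2 := by
  have : NeZero n := ⟨by omega⟩
  have : Fact (2 < n) := ⟨hn⟩
  have : Fact (1 < n) := ⟨by omega⟩
  have hbase : IsBase (DihedralGroup n) (({0, 1} : Finset (ZMod n)) : Set (ZMod n)) := by
    rw [Finset.coe_pair]
    exact isBase_zero_one_of_injective ZMod.neg_one_ne_one Function.injective_id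
  have hmin (C : Finset (ZMod n)) (hC : IsBase (DihedralGroup n) (C : Set (ZMod n))) :
      ({0, 1} : Finset (ZMod n)).card ≤ C.card := by
    rw [Finset.card_pair zero_ne_one]
    by_contra! hlt
    obtain ⟨c, hc⟩ := Finset.coe_nonempty.1 hC.nonempty
    refine not_isBase_of_forall_sr_smul_eq (i := -(c + c)) (fun x hx => ?_) hC
    rw [Finset.card_le_one.1 (Nat.le_of_lt_succ hlt) x hx c hc, sr_smul,
      Algebra.algebraMap_self_apply]
    ring
  have hgraph := graphAut_mulEquiv_and_graphBaseSize_eq_card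
    range_toPermHom_eq_graphAut_circulantGraph_one hbase hmin
  rw [Finset.card_pair zero_ne_one] at hgraph
  exact ⟨ZMod n, inferInstance, circulantGraph {1}, hgraph⟩

end Cycle

section TwoAffineOrbits

open DihedralGroup MulAction

variable {n : ℕ} {R S : Type*} [CommRing R] [Algebra (ZMod n) R] [CommRing S] [Algebra (ZMod n) S]

theorem isBase_inl_zero_inl_one_inr_zero (hR : (-1 : R) ≠ 1)
    (hinj : Function.Injective (algebraMap (ZMod n) (R × S))) :
    IsBase (DihedralGroup n) ({.inl 0, .inl 1, .inr 0} : Set (R ⊕ S)) := by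
  intro g hg
  have h0 : g • (0 : R) = 0 := Sum.inl_injective (hg (.inl 0) (by simp))
  have h1 : g • (1 : R) = 1 := Sum.inl_injective (hg (.inl 1) (by simp))
  have h0' : g • (0 : S) = 0 := Sum.inr_injective (hg (.inr 0) (by simp))
  obtain ⟨i, rfl, hi⟩ := exists_eq_r_of_affine_fixes_zero_one hR h0 h1
  rw [r_smul, zero_add] at h0'
  rw [(map_eq_zero_iff _ hinj).1 (Prod.ext hi h0'), r_zero]

theorem three_le_card_of_isBase_sum [Nontrivial R] [Nontrivial S]
    (hsurj : Function.Surjective (algebraMap (ZMod n) (R × S))) {B : Finset (R ⊕ S)}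
    (hB : IsBase (DihedralGroup n) (B : Set (R ⊕ S))) : 3 ≤ B.card := by
  have hlift (a : R) (b : S) :
      ∃ i : ZMod n, algebraMap (ZMod n) R i = a ∧ algebraMap (ZMod n) S i = b :=
    (hsurj (a, b)).imp fun _ hi => Prod.ext_iff.1 hi
  have hrot {i : ZMod n} (hi : ∀ z ∈ B, (r i : DihedralGroup n) • z = z) : i = 0 :=
    r.inj (hB _ hi)
  have hleft : B.toLeft.Nonempty := by
    by_contra! hempty
    obtain ⟨i, hiR, hiS⟩ := hlift 1 0
    refine one_ne_zero (α := R) (hiR.symm.trans ?_)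
    rw [hrot (i := i), map_zero]
    rintro (x | y) hz
    · simp [← Finset.mem_toLeft, hempty] at hz
    · rw [Sum.smul_inr, r_smul, hiS, add_zero]
  have hright : B.toRight.Nonempty := by
    by_contra! hempty
    obtain ⟨i, hiR, hiS⟩ := hlift 0 1
    refine one_ne_zero (α := S) (hiS.symm.trans ?_)
    rw [hrot (i := i), map_zero]
    rintro (x | y) hz
    · rw [Sum.smul_inl, r_smul, hiR, add_zero]
    · simp [← Finset.mem_toRight, hempty] at hz
  have hnot : ¬(B.toLeft.card ≤ 1 ∧ B.toRight.card ≤ 1) := by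
    rintro ⟨hl, hr⟩
    obtain ⟨x₀, hx₀⟩ := hleft
    obtain ⟨y₀, hy₀⟩ := hright
    obtain ⟨i, hiR, hiS⟩ := hlift (-(x₀ + x₀)) (-(y₀ + y₀))
    refine not_isBase_of_forall_sr_smul_eq (i := i) ?_ hB
    rintro (x | y) hz
    · rw [Finset.card_le_one.1 hl x (Finset.mem_toLeft.2 hz) x₀ hx₀, Sum.smul_inl, sr_smul, hiR]
      ring_nf
    · rw [Finset.card_le_one.1 hr y (Finset.mem_toRight.2 hz) y₀ hy₀, Sum.smul_inr, sr_smul, hiS]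
      ring_nf
  rw [← Finset.card_pos] at hleft hright
  have hsum := B.card_toLeft_add_card_toRight
  omega

theorem permBaseSize_affine_sum_eq_three (hR : (-1 : R) ≠ 1) [Nontrivial S]
    (hbij : Function.Bijective (algebraMap (ZMod n) (R × S))) :
    permBaseSize (toPermHom (DihedralGroup n) (R ⊕ S)).range = 3 := by
  classical
  have : Nontrivial R := nontrivial_of_ne _ _ hR
  have hcard : ({.inl 0, .inl 1, .inr 0} : Finset (R ⊕ S)).card = 3 := by simp
  rw [← hcard]
  refine permBaseSize_range_toPermHom_eq_card ?_ fun C hC => ?_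
  · simpa using isBase_inl_zero_inl_one_inr_zero hR hbij.1
  · rw [hcard]
    exact three_le_card_of_isBase_sum hbij.2 hC

theorem exists_monoidHom_perm_fin {G α : Type*} [Group G] [MulAction G α] [FaithfulSMul G α]
    [Finite α] :
    ∃ (k : ℕ) (φ : G →* Equiv.Perm (Fin k)), Function.Injective φ ∧
      permBaseSize φ.range = permBaseSize (toPermHom G α).range := by
  let e := Finite.equivFin α
  refine ⟨Nat.card α, e.permCongrHom.toMonoidHom.comp (toPermHom G α), ?_, ?_⟩
  · exact e.permCongrHom.injective.comp toPerm_injective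
  · rw [MonoidHom.range_comp, permBaseSize_map_permCongrHom]

theorem exists_permBaseSize_eq_three {a b : ℕ} (hab : a.Coprime b) (ha : 2 < a) (hb : 1 < b) :
    ∃ (k : ℕ) (φ : DihedralGroup (a * b) →* Equiv.Perm (Fin k)),
      Function.Injective φ ∧ permBaseSize φ.range = 3 := by
  have : NeZero a := ⟨by omega⟩
  have : NeZero b := ⟨by omega⟩
  have : Fact (2 < a) := ⟨ha⟩
  have : Fact (1 < b) := ⟨hb⟩
  let _ : Algebra (ZMod (a * b)) (ZMod a) := (ZMod.castHom (dvd_mul_right a b) _).toAlgebra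
  let _ : Algebra (ZMod (a * b)) (ZMod b) := (ZMod.castHom (dvd_mul_left b a) _).toAlgebra
  have hbij : Function.Bijective (algebraMap (ZMod (a * b)) (ZMod a × ZMod b)) := by
    rw [Subsingleton.elim (algebraMap _ _) (ZMod.chineseRemainder hab).toRingHom]
    exact (ZMod.chineseRemainder hab).bijective
  have := (isBase_inl_zero_inl_one_inr_zero ZMod.neg_one_ne_one hbij.1).faithfulSMul
  rw [← permBaseSize_affine_sum_eq_three ZMod.neg_one_ne_one hbij]
  exact exists_monoidHom_perm_fin

end TwoAffineOrbits

section TwoInvolutions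

open MulAction SimpleGraph

variable {G : Type*} [Group G] {s t : G}

/-- Two copies of `G` joined by a perfect matching, with the Cayley edges of `s` in the left copy
and those of both `s` and `t` in the right copy. If `s ≠ t` are involutions generating `G`, the
vertex degrees tell the copies apart, hence the two kinds of Cayley edges, and only left
multiplications are automorphisms. -/
def twoLayerCayleyGraph (s t : G) : SimpleGraph (G ⊕ G) where
  Adj
    | .inl g, .inl h => (mulCayley {s}).Adj g h
    | .inr g, .inr h => (mulCayley {s, t}).Adj g h
    | .inl g, .inr h => g = h
    | .inr g, .inl h => g = h
  symm.symm := by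
    rintro (g | g) (h | h) hgh
    · exact SimpleGraph.Adj.symm hgh
    · exact Eq.symm hgh
    · exact Eq.symm hgh
    · exact SimpleGraph.Adj.symm hgh
  loopless.irrefl := by
    rintro (g | g) hg
    · exact SimpleGraph.irrefl _ hg
    · exact SimpleGraph.irrefl _ hg

theorem twoLayerCayleyGraph_adj_inl_inr {g h : G} :
    (twoLayerCayleyGraph s t).Adj (.inl g) (.inr h) ↔ g = h :=
  Iff.rfl

theorem mulCayley_adj_of_orderOf_eq_two {X : Set G} (hX : ∀ x ∈ X, orderOf x = 2) {g h : G} :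
    (mulCayley X).Adj g h ↔ g⁻¹ * h ∈ X := by
  have hinv {x : G} (hx : x⁻¹ ∈ X) : x ∈ X := by
    rwa [← inv_inv x, inv_eq_self_of_orderOf_eq_two (hX _ hx)]
  have hcomm (hhg : h⁻¹ * g ∈ X) : g⁻¹ * h ∈ X := hinv (by rwa [mul_inv_rev, inv_inv])
  rw [mulCayley_adj, or_iff_left_of_imp hcomm, and_iff_right_iff_imp]
  rintro hgh rfl
  simpa using hX _ hgh

theorem twoLayerCayleyGraph_adj_inl_inl (hs : orderOf s = 2) {g h : G} :
    (twoLayerCayleyGraph s t).Adj (.inl g) (.inl h) ↔ h = g * s := by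
  rw [← inv_mul_eq_iff_eq_mul]
  exact mulCayley_adj_of_orderOf_eq_two (by simpa using hs)

theorem twoLayerCayleyGraph_adj_inr_inr (hs : orderOf s = 2) (ht : orderOf t = 2) {g h : G} :
    (twoLayerCayleyGraph s t).Adj (.inr g) (.inr h) ↔ h = g * s ∨ h = g * t := by
  rw [← inv_mul_eq_iff_eq_mul, ← inv_mul_eq_iff_eq_mul]
  exact mulCayley_adj_of_orderOf_eq_two (by simpa using ⟨hs, ht⟩)

theorem ncard_neighborSet_twoLayerCayleyGraph_inl (hs : orderOf s = 2) (g : G) :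
    ((twoLayerCayleyGraph s t).neighborSet (.inl g)).ncard = 2 := by
  have hset : (twoLayerCayleyGraph s t).neighborSet (.inl g) = {.inl (g * s), .inr g} := by
    ext (h | h)
    · simp [twoLayerCayleyGraph_adj_inl_inl hs]
    · simp [twoLayerCayleyGraph_adj_inl_inr, eq_comm]
  rw [hset, Set.ncard_pair Sum.inl_ne_inr]

theorem ncard_neighborSet_twoLayerCayleyGraph_inr (hs : orderOf s = 2) (ht : orderOf t = 2)
    (hst : s ≠ t) (g : G) : ((twoLayerCayleyGraph s t).neighborSet (.inr g)).ncard = 3 := by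
  have hset : (twoLayerCayleyGraph s t).neighborSet (.inr g) =
      {.inl g, .inr (g * s), .inr (g * t)} := by
    ext (h | h)
    · simp [SimpleGraph.adj_comm, twoLayerCayleyGraph_adj_inl_inr]
    · simp [twoLayerCayleyGraph_adj_inr_inr hs ht]
  rw [hset]
  refine Set.ncard_eq_three.2 ⟨_, _, _, Sum.inl_ne_inr, Sum.inl_ne_inr, ?_, rfl⟩
  exact Sum.inr_injective.ne (mul_right_injective g |>.ne hst)

theorem toPerm_mem_graphAut_twoLayerCayleyGraph (g : G) :
    (toPerm g : Equiv.Perm (G ⊕ G)) ∈ graphAut (twoLayerCayleyGraph s t) := by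
  rintro (a | a) (b | b)
  · exact mulCayley_adj_mul_iff_right
  · exact mul_right_inj g
  · exact mul_right_inj g
  · exact mulCayley_adj_mul_iff_right

theorem exists_apply_inl_inr_of_mem_graphAut_twoLayerCayleyGraph (hs : orderOf s = 2)
    (ht : orderOf t = 2) (hst : s ≠ t) {φ : Equiv.Perm (G ⊕ G)}
    (hφ : φ ∈ graphAut (twoLayerCayleyGraph s t)) (g : G) :
    ∃ h, φ (.inl g) = .inl h ∧ φ (.inr g) = .inr h := by
  rcases hl : φ (.inl g) with a | a
  · rcases hr : φ (.inr g) with b | b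
    · have hcard := ncard_neighborSet_of_mem_graphAut hφ (.inr g)
      rw [hr, ncard_neighborSet_twoLayerCayleyGraph_inl hs,
        ncard_neighborSet_twoLayerCayleyGraph_inr hs ht hst] at hcard
      omega
    · have hadj := (hφ (.inl g) (.inr g)).2 (twoLayerCayleyGraph_adj_inl_inr.2 rfl)
      rw [hl, hr, twoLayerCayleyGraph_adj_inl_inr] at hadj
      exact ⟨a, rfl, by rw [hadj]⟩
  · have hcard := ncard_neighborSet_of_mem_graphAut hφ (.inl g)
    rw [hl, ncard_neighborSet_twoLayerCayleyGraph_inl hs,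
      ncard_neighborSet_twoLayerCayleyGraph_inr hs ht hst] at hcard
    omega

theorem map_eq_map_one_mul_of_closure_eq_top {X : Set G} (hX : Subgroup.closure X = ⊤) {f : G → G}
    (hf : ∀ g, ∀ x ∈ X, f (g * x) = f g * x) (g : G) : f g = f 1 * g := by
  induction hX ▸ Subgroup.mem_top g using Subgroup.closure_induction_right with
  | one => rw [mul_one]
  | mul_right g _ x hx ih => rw [hf g x hx, ih, mul_assoc]
  | mul_inv_cancel g _ x hx ih =>
    rw [← mul_assoc, eq_mul_inv_iff_mul_eq, ← hf _ x hx, inv_mul_cancel_right, ih]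

theorem range_toPermHom_eq_graphAut_twoLayerCayleyGraph (hs : orderOf s = 2) (ht : orderOf t = 2)
    (hst : s ≠ t) (hgen : Subgroup.closure {s, t} = ⊤) :
    (toPermHom G (G ⊕ G)).range = graphAut (twoLayerCayleyGraph s t) := by
  refine le_antisymm ?_ fun φ hφ => ?_
  · rintro _ ⟨g, rfl⟩
    exact toPerm_mem_graphAut_twoLayerCayleyGraph g
  choose f hl hr using exists_apply_inl_inr_of_mem_graphAut_twoLayerCayleyGraph hs ht hst hφ
  have hfs (g : G) : f (g * s) = f g * s := by
    rw [← twoLayerCayleyGraph_adj_inl_inl hs (t := t), ← hl, ← hl, hφ,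
      twoLayerCayleyGraph_adj_inl_inl hs]
  have hft (g : G) : f (g * t) = f g * t := by
    have hadj := (hφ (.inr g) (.inr (g * t))).2
      ((twoLayerCayleyGraph_adj_inr_inr hs ht).2 (.inr rfl))
    rw [hr, hr, twoLayerCayleyGraph_adj_inr_inr hs ht] at hadj
    refine hadj.resolve_left fun h => hst ?_
    rw [← hfs, ← Sum.inl_injective.eq_iff, ← hl, ← hl, φ.apply_eq_iff_eq, Sum.inl.injEq,
      mul_right_inj] at h
    exact h.symm
  have hf := map_eq_map_one_mul_of_closure_eq_top hgen (f := f) (by simp [hfs, hft])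
  refine ⟨f 1, Equiv.ext ?_⟩
  rintro (g | g)
  · exact .symm <| (hl g).trans <| congrArg Sum.inl (hf g)
  · exact .symm <| (hr g).trans <| congrArg Sum.inr (hf g)

theorem graphAut_twoLayerCayleyGraph_mulEquiv_and_graphBaseSize_eq_one (hs : orderOf s = 2)
    (ht : orderOf t = 2) (hst : s ≠ t) (hgen : Subgroup.closure {s, t} = ⊤) :
    Nonempty (graphAut (twoLayerCayleyGraph s t) ≃* G) ∧
      graphBaseSize (twoLayerCayleyGraph s t) = 1 := by
  have : Nontrivial G := ⟨s, t, hst⟩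
  have hbase : IsBase G (({.inl 1} : Finset (G ⊕ G)) : Set (G ⊕ G)) := fun g hg => by
    simpa using Sum.inl_injective (hg (.inl 1) (by simp))
  rw [← Finset.card_singleton (.inl 1 : G ⊕ G)]
  refine graphAut_mulEquiv_and_graphBaseSize_eq_card
    (range_toPermHom_eq_graphAut_twoLayerCayleyGraph hs ht hst hgen) hbase fun C hC => ?_
  exact Finset.card_pos.2 (Finset.coe_nonempty.1 hC.nonempty)

end TwoInvolutions

section DihedralGenerators

open DihedralGroup

theorem closure_sr_zero_sr_one (n : ℕ) :
    Subgroup.closure {(sr 0 : DihedralGroup n), sr 1} = ⊤ := by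
  have h0 : sr 0 ∈ Subgroup.closure {(sr 0 : DihedralGroup n), sr 1} :=
    Subgroup.subset_closure (by simp)
  have h1 : sr 1 ∈ Subgroup.closure {(sr 0 : DihedralGroup n), sr 1} :=
    Subgroup.subset_closure (by simp)
  have hr (i : ZMod n) : r i ∈ Subgroup.closure {(sr 0 : DihedralGroup n), sr 1} := by
    obtain ⟨k, rfl⟩ := ZMod.intCast_surjective i
    simpa only [sr_mul_sr, sub_zero, r_one_zpow] using zpow_mem (mul_mem h0 h1) k
  refine eq_top_iff.2 fun g _ => ?_
  rcases g with i | i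
  · exact hr i
  · rw [← zero_add i, ← sr_mul_r]
    exact mul_mem h0 (hr i)

theorem exists_graph_graphBaseSize_eq_one {n : ℕ} (hn : 1 < n) :
    ∃ (V : Type) (_ : Fintype V) (Γ : SimpleGraph V),
      Nonempty (graphAut Γ ≃* DihedralGroup n) ∧ graphBaseSize Γ = 1 := by
  have : NeZero n := ⟨by omega⟩
  have : Fact (1 < n) := ⟨hn⟩
  have hne : (sr 0 : DihedralGroup n) ≠ sr 1 := fun h => zero_ne_one (sr.inj h)
  exact ⟨_, inferInstance, twoLayerCayleyGraph (sr 0) (sr 1),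
    graphAut_twoLayerCayleyGraph_mulEquiv_and_graphBaseSize_eq_one (orderOf_sr 0) (orderOf_sr 1)
      hne (closure_sr_zero_sr_one n)⟩

end DihedralGenerators

theorem stmt19_general {p q : ℕ} (hp : p.Prime) (hq : q.Prime) (hop : Odd p) (hoq : Odd q)
    (hpq : p ≠ q) :
    (¬ ∃ (V : Type*) (Γ : SimpleGraph V),
        Nonempty (graphAut Γ ≃* DihedralGroup (p * q)) ∧ graphBaseSize Γ = 3) ∧
    (∀ (V : Type*) (Γ : SimpleGraph V),
        Nonempty (graphAut Γ ≃* DihedralGroup (p * q)) →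
          graphBaseSize Γ = 1 ∨ graphBaseSize Γ = 2) ∧
    (∀ m : ℕ, m = 1 ∨ m = 2 →
      ∃ (V : Type) (_ : Fintype V) (Γ : SimpleGraph V),
        Nonempty (graphAut Γ ≃* DihedralGroup (p * q)) ∧ graphBaseSize Γ = m) ∧
    (∃ (n : ℕ) (φ : DihedralGroup (p * q) →* Equiv.Perm (Fin n)),
        Function.Injective φ ∧ permBaseSize φ.range = 3) := by
  have hp2 : 2 < p := hp.two_le.lt_of_ne' (hop.ne_two_of_dvd_nat dvd_rfl)
  have hpq2 : 2 < p * q := hp2.trans (lt_mul_of_one_lt_right hp.pos hq.one_lt)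
  refine ⟨?_, ?_, ?_, ?_⟩
  · rintro ⟨V, Γ, ⟨e⟩, h3⟩
    have h12 := graphBaseSize_eq_one_or_eq_two hp hq hop hoq hpq e
    omega
  · rintro V Γ ⟨e⟩
    exact graphBaseSize_eq_one_or_eq_two hp hq hop hoq hpq e
  · rintro m (rfl | rfl)
    · exact exists_graph_graphBaseSize_eq_one (one_lt_two.trans hpq2)
    · exact exists_graph_graphBaseSize_eq_two hpq2
  · exact exists_permBaseSize_eq_three ((Nat.coprime_primes hp hq).2 hpq) hp2 hq.one_lt

/-- For distinct odd primes `p` and `q`: no finite graph `Γ` with `Aut(Γ)` isomorphic to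
the dihedral group of order `2pq` has determining number (minimal base size) `3`; the
determining set of `D_{pq}` is `{1, 2}`; and the base size set of `D_{pq}` contains `3`,
witnessed by a faithful permutation representation with base size `3`. -/
theorem stmt19 (p q : ℕ) (hp : p.Prime) (hq : q.Prime) (hop : Odd p) (hoq : Odd q)
    (hpq : p ≠ q) :
    (¬ ∃ (V : Type) (_ : Fintype V) (Γ : SimpleGraph V),
        Nonempty (graphAut Γ ≃* DihedralGroup (p * q)) ∧ graphBaseSize Γ = 3) ∧
    (∀ (V : Type) (_ : Fintype V) (Γ : SimpleGraph V),
        Nonempty (graphAut Γ ≃* DihedralGroup (p * q)) →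
          graphBaseSize Γ = 1 ∨ graphBaseSize Γ = 2) ∧
    (∀ m : ℕ, m = 1 ∨ m = 2 →
      ∃ (V : Type) (_ : Fintype V) (Γ : SimpleGraph V),
        Nonempty (graphAut Γ ≃* DihedralGroup (p * q)) ∧ graphBaseSize Γ = m) ∧
    (∃ (n : ℕ) (φ : DihedralGroup (p * q) →* Equiv.Perm (Fin n)),
        Function.Injective φ ∧ permBaseSize φ.range = 3) := by
  obtain ⟨h3, h12, hexists⟩ := stmt19_general hp hq hop hoq hpq
  exact ⟨fun ⟨V, _, Γ, hΓ⟩ => h3 ⟨V, Γ, hΓ⟩, fun V _ Γ => h12 V Γ, hexists⟩
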